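/- arXiv:1510.04408 — 10 statements merged into one kernel-verified Lean document; each statement's English description precedes it below -/
import Mathlib

section
/- The function F_GCA is a normalized 2-cocycle on Z_n^m with values in k∖{0}: F_GCA(g,0) = F_GCA(0,g) = 1 for all g ∈ Z_n^m, and F_GCA(f,g) · F_GCA(f+g,h) = F_GCA(g,h) · F_GCA(f,g+h) for all f,g,h ∈ Z_n^m. -/
open Finset

/-- The 2-cochain `F_GCA` on `(ℤ/nℤ)^m` defining the generalized Clifford algebra
as a twisted group algebra. -/
noncomputable def Fgca {k : Type*} [Field k] (n m : ℕ) (ω : k) (q : Fin m → k)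
    (g h : Fin m → ZMod n) : k :=
  ω ^ (∑ i : Fin m, ∑ j : Fin m, if j < i then (g i).val * (h j).val else 0) *
    ∏ i : Fin m, q i ^ (((g i).val + (h i).val) / n)

/-- `F_GCA` is a normalized 2-cocycle on `(ℤ/nℤ)^m` with values in `k \ {0}`. -/
theorem Fgca_normalized_two_cocycle {k : Type*} [Field k] (n m : ℕ)
    (hn : 2 ≤ n) (hm : 1 ≤ m) (hchar : (n : k) ≠ 0)
    (ω : k) (hω : IsPrimitiveRoot ω n) (q : Fin m → k) (hq : ∀ i, q i ≠ 0) :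
    (∀ g h : Fin m → ZMod n, Fgca n m ω q g h ≠ 0) ∧
    (∀ g : Fin m → ZMod n, Fgca n m ω q g 0 = 1 ∧ Fgca n m ω q 0 g = 1) ∧
    (∀ f g h : Fin m → ZMod n,
      Fgca n m ω q f g * Fgca n m ω q (f + g) h =
        Fgca n m ω q g h * Fgca n m ω q f (g + h)) := by
  have hn0 : 0 < n := by omega
  haveI : NeZero n := ⟨by omega⟩
  have hω0 : ω ≠ 0 := hω.ne_zero (by omega)
  refine ⟨?_, ?_, ?_⟩
  · intro g h
    unfold Fgca
    exact mul_ne_zero (pow_ne_zero _ hω0)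
      (Finset.prod_ne_zero_iff.mpr fun i _ => pow_ne_zero _ (hq i))
  · intro g
    have hd : ∀ i, (g i).val / n = 0 := fun i => Nat.div_eq_of_lt (ZMod.val_lt (g i))
    constructor <;> simp [Fgca, hd]
  · intro f g h
    have key : ∀ a b : ℕ, (a : ZMod n) = (b : ZMod n) → ω ^ a = ω ^ b := by
      intro a b hab
      have h1 : a ≡ b [MOD n] := (ZMod.natCast_eq_natCast_iff a b n).mp hab
      rw [← Nat.div_add_mod a n, ← Nat.div_add_mod b n, pow_add, pow_add, pow_mul, pow_mul,
        hω.pow_eq_one, one_pow, one_pow, h1]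
    have div1 : ∀ a b c : ℕ, (a + b) / n + ((a + b) % n + c) / n = (a + b + c) / n := by
      intro a b c
      conv_rhs => rw [← Nat.div_add_mod (a + b) n, add_assoc, Nat.mul_add_div hn0]
    unfold Fgca
    rw [mul_mul_mul_comm, mul_mul_mul_comm (ω ^ _) _ (ω ^ _), ← pow_add, ← pow_add,
      ← Finset.prod_mul_distrib, ← Finset.prod_mul_distrib]
    congr 1
    · apply key
      push_cast
      simp only [← Finset.sum_add_distrib, ZMod.natCast_zmod_val, Pi.add_apply]
      refine Finset.sum_congr rfl fun i _ => Finset.sum_congr rfl fun j _ => ?_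
      split_ifs
      · ring
      · simp
    · refine Finset.prod_congr rfl fun i _ => ?_
      rw [← pow_add, ← pow_add, Pi.add_apply, Pi.add_apply, ZMod.val_add, ZMod.val_add, div1,
        add_comm (f i).val (_ % n), div1]
      congr 2
      ring
end

section
/- For all g,h ∈ Z_n^m one has e^g · e^h = F_GCA(g,h) · e^{g+h}; explicitly, (e_1^{g_1'} ⋯ e_m^{g_m'}) · (e_1^{h_1'} ⋯ e_m^{h_m'}) = ω^{Σ_{1 ≤ j < i ≤ m} g_i' h_j'} · (∏_{i=1}^m q_i^{⌊(g_i' + h_i')/n⌋}) · e_1^{(g_1+h_1)'} ⋯ e_m^{(g_m+h_m)'}. -/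
open Finset

/-- The ordered monomial `e^g = e_1^{g_1'} ⋯ e_m^{g_m'}`. -/
noncomputable def gcaMonomial {A : Type*} [Ring A] (n m : ℕ)
    (e : Fin m → A) (g : Fin m → ZMod n) : A :=
  (List.ofFn fun i => e i ^ (g i).val).prod

theorem gca_aux_pow {k : Type*} [Field k] {A : Type*} [Ring A] [Algebra k A] (ω : k) (x y : A)
    (hxy : x * y = ω • (y * x)) (a b : ℕ) : x ^ a * y ^ b = ω ^ (a * b) • (y ^ b * x ^ a) := by
  have h1 : ∀ b : ℕ, x * y ^ b = ω ^ b • (y ^ b * x) := by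
    intro b
    induction b with
    | zero => simp
    | succ b ih =>
      rw [pow_succ, ← mul_assoc, ih, smul_mul_assoc, mul_assoc, hxy, mul_smul_comm, smul_smul,
        pow_succ, mul_assoc]
  induction a with
  | zero => simp
  | succ a ih =>
    rw [pow_succ, mul_assoc, h1, mul_smul_comm, ← mul_assoc, ih, smul_mul_assoc, smul_smul,
      mul_assoc, ← pow_add]
    congr 2
    ring

theorem gca_aux_prod {k : Type*} [Field k] {A : Type*} [Ring A] [Algebra k A] (ω : k) (y : A)
    (b : ℕ) : ∀ (m : ℕ) (e : Fin m → A) (_ : ∀ i, e i * y = ω • (y * e i)) (a : Fin m → ℕ),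
    (List.ofFn fun i => e i ^ a i).prod * y ^ b =
      ω ^ (∑ i, a i * b) • (y ^ b * (List.ofFn fun i => e i ^ a i).prod) := by
  intro m
  induction m with
  | zero => intro e he a; simp
  | succ m ih =>
    intro e he a
    rw [List.ofFn_succ, List.prod_cons, mul_assoc,
      ih (fun i => e i.succ) (fun i => he i.succ) (fun i => a i.succ), mul_smul_comm, ← mul_assoc,
      gca_aux_pow ω _ _ (he 0), smul_mul_assoc, smul_smul, mul_assoc, ← pow_add,
      Fin.sum_univ_succ, add_comm]

theorem gca_aux_main {k : Type*} [Field k] {A : Type*} [Ring A] [Algebra k A] (n : ℕ) (ω : k) :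
    ∀ (m : ℕ) (q : Fin m → k) (e : Fin m → A) (_ : ∀ i, e i ^ n = q i • (1 : A))
    (_ : ∀ i j : Fin m, j < i → e i * e j = ω • (e j * e i)) (a b : Fin m → ℕ),
    (List.ofFn fun i => e i ^ a i).prod * (List.ofFn fun i => e i ^ b i).prod =
      (ω ^ (∑ i : Fin m, ∑ j : Fin m, if j < i then a i * b j else 0) *
        ∏ i : Fin m, q i ^ ((a i + b i) / n)) •
        (List.ofFn fun i => e i ^ ((a i + b i) % n)).prod := by
  intro m
  induction m with
  | zero => intros; simp
  | succ m ih =>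
    intro q e hp hc a b
    have key : e 0 ^ a 0 * e 0 ^ b 0 =
        q 0 ^ ((a 0 + b 0) / n) • e 0 ^ ((a 0 + b 0) % n) := by
      rw [← pow_add]
      conv_lhs => rw [← Nat.div_add_mod (a 0 + b 0) n, pow_add, pow_mul, hp 0]
      rw [smul_pow, one_pow, smul_mul_assoc, one_mul]
    have ih' := ih (fun i => q i.succ) (fun i => e i.succ) (fun i => hp i.succ)
      (fun i j hij => hc i.succ j.succ (Fin.succ_lt_succ_iff.2 hij))
      (fun i => a i.succ) (fun i => b i.succ)
    have h2 := gca_aux_prod ω (e 0) (b 0) m (fun i => e i.succ)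
      (fun i => hc i.succ 0 (Fin.succ_pos i)) (fun i => a i.succ)
    have hs : (∑ i : Fin (m+1), ∑ j : Fin (m+1), if j < i then a i * b j else 0) =
        (∑ i : Fin m, a i.succ * b 0) +
        ∑ i : Fin m, ∑ j : Fin m, if j < i then a i.succ * b j.succ else 0 := by
      rw [Fin.sum_univ_succ]
      simp [Fin.sum_univ_succ (n := m), Finset.sum_add_distrib]
    rw [hs, Fin.prod_univ_succ]
    simp only [List.ofFn_succ, List.prod_cons]
    rw [mul_assoc, ← mul_assoc _ (e 0 ^ b 0), h2, smul_mul_assoc, mul_assoc, ih']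
    simp only [mul_smul_comm, smul_smul]
    rw [← mul_assoc (e 0 ^ a 0), key, smul_mul_assoc, smul_smul]
    congr 1
    rw [pow_add]
    ring

/-- Products of standard monomials in a generalized Clifford algebra:
`e^g ⬝ e^h = F_GCA(g,h) ⬝ e^{g+h}`. -/
theorem gcaMonomial_mul {k : Type*} [Field k] {A : Type*} [Ring A] [Algebra k A]
    (n m : ℕ) (hn : 2 ≤ n) (hm : 1 ≤ m) (hchar : (n : k) ≠ 0)
    (ω : k) (hω : IsPrimitiveRoot ω n) (q : Fin m → k) (hq : ∀ i, q i ≠ 0)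
    (e : Fin m → A) (hpow : ∀ i, e i ^ n = q i • (1 : A))
    (hcomm : ∀ i j : Fin m, j < i → e i * e j = ω • (e j * e i)) :
    ∀ g h : Fin m → ZMod n,
      gcaMonomial n m e g * gcaMonomial n m e h =
        Fgca n m ω q g h • gcaMonomial n m e (g + h) := by
  intro g h
  haveI : NeZero n := ⟨by omega⟩
  have := gca_aux_main n ω m q e hpow hcomm (fun i => (g i).val) (fun i => (h i).val)
  simpa only [gcaMonomial, Fgca, Pi.add_apply, ZMod.val_add] using this
end

section
/- Let C = C^{(n)}(q_1,…,q_m) be the quotient of the free associative unital k-algebra on generators x_1,…,x_m by the two-sided ideal generated by the elements x_i^n − q_i·1 (1 ≤ i ≤ m) and x_i x_j − ω x_j x_i (1 ≤ j < i ≤ m), and let e_i denote the image of x_i in C. Then the n^m standard monomials {e_1^{a_1} e_2^{a_2} ⋯ e_m^{a_m} : 0 ≤ a_i ≤ n−1} form a k-vector space basis of C; in particular dim_k C = n^m. -/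
/-- The defining relations of the generalized Clifford algebra
`C^{(n)}(q_1,…,q_m)`: `x_i^n = q_i·1` and `x_i x_j = ω x_j x_i` for `j < i`.
Quotienting the free algebra by (the two-sided ideal generated by) these
relations yields the generalized Clifford algebra. -/
inductive GCARel (k : Type*) [Field k] (n m : ℕ) (ω : k) (q : Fin m → k) :
    FreeAlgebra k (Fin m) → FreeAlgebra k (Fin m) → Prop
  | pow (i : Fin m) :
      GCARel k n m ω q (FreeAlgebra.ι k i ^ n) (algebraMap k _ (q i))
  | comm (i j : Fin m) (h : j < i) :
      GCARel k n m ω q (FreeAlgebra.ι k i * FreeAlgebra.ι k j)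
        (ω • (FreeAlgebra.ι k j * FreeAlgebra.ι k i))

/-- The generalized Clifford algebra `C^{(n)}(q_1,…,q_m)`. -/
abbrev GCA (k : Type*) [Field k] (n m : ℕ) (ω : k) (q : Fin m → k) : Type _ :=
  RingQuot (GCARel k n m ω q)

/-- The generators `e_i` of the generalized Clifford algebra, i.e., the images of
the free generators `x_i`. -/
noncomputable def GCAgen (k : Type*) [Field k] (n m : ℕ) (ω : k) (q : Fin m → k)
    (i : Fin m) : GCA k n m ω q :=
  RingQuot.mkAlgHom k (GCARel k n m ω q) (FreeAlgebra.ι k i)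

namespace GCAaux

variable {k : Type*} [Field k] {n m : ℕ}

/-- The list monomial. -/
noncomputable def mon {A : Type*} [Monoid A] (e : Fin m → A) (l : List (Fin m))
    (a : Fin m → ℕ) : A := (l.map fun i => e i ^ a i).prod

lemma mon_congr {A : Type*} [Monoid A] (e : Fin m → A) (l : List (Fin m))
    (a b : Fin m → ℕ) (h : ∀ i ∈ l, a i = b i) : mon e l a = mon e l b := by
  unfold mon
  congr 1
  apply List.map_congr_left
  intro i hi
  rw [h i hi]

lemma mon_cons {A : Type*} [Monoid A] (e : Fin m → A) (j : Fin m) (l : List (Fin m))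
    (a : Fin m → ℕ) : mon e (j :: l) a = e j ^ a j * mon e l a := by
  simp [mon]

lemma comm_pow {A : Type*} [Ring A] [Algebra k A] (ω : k) (x y : A)
    (h : x * y = ω • (y * x)) (t : ℕ) : x * y ^ t = ω ^ t • (y ^ t * x) := by
  induction t with
  | zero => simp
  | succ t ih =>
    rw [pow_succ, ← mul_assoc, ih, smul_mul_assoc, mul_assoc, h, mul_smul_comm, smul_smul,
      pow_succ, mul_assoc]

lemma gen_mul_mon {A : Type*} [Ring A] [Algebra k A] (ω : k) (e : Fin m → A)
    (h : ∀ i j, j < i → e i * e j = ω • (e j * e i)) (a : Fin m → ℕ) (i : Fin m)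
    (l : List (Fin m)) (hl : l.Pairwise (· < ·)) (hi : i ∈ l) :
    ∃ c : k, e i * mon e l a = c • mon e l (Function.update a i (a i + 1)) := by
  induction l with
  | nil => simp at hi
  | cons j l ih =>
    rw [List.pairwise_cons] at hl
    rw [mon_cons, mon_cons]
    by_cases hij : i = j
    · subst hij
      refine ⟨1, ?_⟩
      rw [mon_congr e l (Function.update a i (a i + 1)) a]
      · simp [pow_succ', mul_assoc]
      · intro x hx
        rw [Function.update_of_ne (hl.1 x hx).ne']
    · have hil : i ∈ l := by simpa [hij] using hi
      obtain ⟨c, hc⟩ := ih hl.2 hil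
      refine ⟨ω ^ a j * c, ?_⟩
      rw [← mul_assoc, comm_pow ω _ _ (h i j (hl.1 i hil)), smul_mul_assoc, mul_assoc, hc,
        mul_smul_comm, smul_smul, Function.update_of_ne (Ne.symm hij)]

lemma mon_top {A : Type*} [Ring A] [Algebra k A] (q : Fin m → k) (e : Fin m → A)
    (h : ∀ i, e i ^ n = algebraMap k A (q i)) (a : Fin m → ℕ) (i : Fin m)
    (l : List (Fin m)) (hl : l.Pairwise (· < ·)) (hi : i ∈ l) :
    mon e l (Function.update a i n) = q i • mon e l (Function.update a i 0) := by
  induction l with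
  | nil => simp at hi
  | cons j l ih =>
    rw [List.pairwise_cons] at hl
    rw [mon_cons, mon_cons]
    by_cases hij : i = j
    · subst hij
      rw [mon_congr e l (Function.update a i n) (Function.update a i 0)]
      · simp [h, Algebra.smul_def]
      · intro x hx
        rw [Function.update_of_ne (hl.1 x hx).ne', Function.update_of_ne (hl.1 x hx).ne']
    · have hil : i ∈ l := by simpa [hij] using hi
      rw [ih hl.2 hil, mul_smul_comm, Function.update_of_ne (Ne.symm hij),
        Function.update_of_ne (Ne.symm hij)]

/-- The weight. -/
noncomputable def wt (ω : k) (i : Fin m) (a : Fin m → Fin n) : k :=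
  ∏ j ∈ Finset.Iio i, ω ^ (a j : ℕ)

lemma wt_update_ge (ω : k) (i j : Fin m) (h : i ≤ j) (a : Fin m → Fin n) (x : Fin n) :
    wt ω i (Function.update a j x) = wt ω i a := by
  unfold wt
  apply Finset.prod_congr rfl
  intro y hy
  have : y < i := by simpa using hy
  rw [Function.update_of_ne (this.trans_le h).ne]

lemma wt_update_lt (ω : k) (i j : Fin m) (h : j < i) (a : Fin m → Fin n) (x : Fin n)
    (hx : ω ^ (x : ℕ) = ω * ω ^ (a j : ℕ)) :
    wt ω i (Function.update a j x) = ω * wt ω i a := by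
  unfold wt
  have hj : j ∈ Finset.Iio i := by simpa using h
  rw [← Finset.mul_prod_erase _ _ hj, ← Finset.mul_prod_erase _ (fun y => ω ^ (a y : ℕ)) hj,
    ← mul_assoc, Function.update_self, hx]
  congr 1
  apply Finset.prod_congr rfl
  intro y hy
  rw [Function.update_of_ne (Finset.ne_of_mem_erase hy)]

lemma wt_pow (ω : k) (hω : ω ^ n = 1) (i : Fin m) (a : Fin m → Fin n) : wt ω i a ^ n = 1 := by
  unfold wt
  rw [← Finset.prod_pow]
  apply Finset.prod_eq_one
  intro j _
  rw [← pow_mul, mul_comm, pow_mul, hω, one_pow]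

/-- cyclic successor -/
def nx (x : Fin n) : Fin n := ⟨(x + 1) % n, Nat.mod_lt _ (Nat.lt_of_le_of_lt (Nat.zero_le _) x.2)⟩

lemma pow_nx (ω : k) (hω : ω ^ n = 1) (x : Fin n) : ω ^ (nx x : ℕ) = ω * ω ^ (x : ℕ) := by
  rw [← pow_succ']
  exact (pow_eq_pow_mod _ hω).symm

/-- wrap-around coefficient -/
noncomputable def kap (q : k) (x : Fin n) : k := if (x : ℕ) + 1 = n then q else 1

/-- The operators. -/
noncomputable def T (ω : k) (q : Fin m → k) (i : Fin m) :
    Module.End k ((Fin m → Fin n) →₀ k) :=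
  Finsupp.linearCombination k fun a =>
    (wt ω i a * kap (q i) (a i)) • Finsupp.single (Function.update a i (nx (a i))) (1 : k)

lemma T_single (ω : k) (q : Fin m → k) (i : Fin m) (a : Fin m → Fin n) :
    T ω q i (Finsupp.single a 1) =
      (wt ω i a * kap (q i) (a i)) • Finsupp.single (Function.update a i (nx (a i))) (1 : k) := by
  rw [T, Finsupp.linearCombination_single, one_smul]

lemma End_ext (f g : Module.End k ((Fin m → Fin n) →₀ k))
    (h : ∀ a, f (Finsupp.single a 1) = g (Finsupp.single a 1)) : f = g := by
  apply Finsupp.lhom_ext'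
  intro a
  apply LinearMap.ext_ring
  exact h a

lemma T_comm (ω : k) (hω : ω ^ n = 1) (q : Fin m → k) (i j : Fin m) (h : j < i) :
    (T ω q i * T ω q j : Module.End k ((Fin m → Fin n) →₀ k)) = ω • (T ω q j * T ω q i) := by
  apply End_ext
  intro a
  rw [LinearMap.smul_apply, Module.End.mul_apply, Module.End.mul_apply, T_single, T_single,
    map_smul, map_smul, T_single, T_single, smul_smul, smul_smul, smul_smul,
    Function.update_of_ne h.ne', Function.update_of_ne h.ne,
    wt_update_lt ω i j h a _ (pow_nx ω hω _), wt_update_ge ω j i h.le,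
    Function.update_comm h.ne]
  congr 1
  ring

lemma T_pow_single (ω : k) (q : Fin m → k) (i : Fin m) (a : Fin m → Fin n) (t : ℕ)
    (ht : (a i : ℕ) + t < n) :
    (T ω q i ^ t) (Finsupp.single a 1) =
      (wt ω i a ^ t) • Finsupp.single (Function.update a i ⟨a i + t, ht⟩) (1 : k) := by
  induction t with
  | zero => simp
  | succ t ih =>
    have h1 : (a i : ℕ) + t < n := by omega
    rw [pow_succ', Module.End.mul_apply, ih h1, map_smul, T_single, smul_smul,
      wt_update_ge ω i i le_rfl, Function.update_self, Function.update_idem]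
    have h2 : nx (⟨a i + t, h1⟩ : Fin n) = ⟨a i + (t + 1), ht⟩ := by
      ext
      simp only [nx]
      rw [Nat.mod_eq_of_lt (by omega)]
      omega
    have h3 : kap (q i) (⟨a i + t, h1⟩ : Fin n) = 1 := by
      unfold kap
      rw [if_neg]
      simp only
      omega
    rw [h2, h3, mul_one, pow_succ]

lemma T_pow (ω : k) (hω : ω ^ n = 1) (q : Fin m → k) (i : Fin m) :
    (T ω q i ^ n : Module.End k ((Fin m → Fin n) →₀ k)) = algebraMap k _ (q i) := by
  apply End_ext
  intro a
  have ha := (a i).2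
  have hn : n = (a i : ℕ) + (1 + (n - 1 - a i)) := by omega
  have h1 : (a i : ℕ) + (n - 1 - a i) < n := by omega
  have h0 : 0 < n := by omega
  have h2 : nx (⟨a i + (n - 1 - a i), h1⟩ : Fin n) = ⟨0, h0⟩ := by
    ext
    simp only [nx]
    rw [show (a i : ℕ) + (n - 1 - a i) + 1 = n by omega, Nat.mod_self]
  have h3 : kap (q i) (⟨a i + (n - 1 - a i), h1⟩ : Fin n) = q i := by
    unfold kap
    rw [if_pos]
    simp only
    omega
  have key : (T ω q i ^ ((a i : ℕ) + (1 + (n - 1 - a i)))) (Finsupp.single a (1 : k)) =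
      (wt ω i a ^ ((a i : ℕ) + (1 + (n - 1 - a i))) * q i) • Finsupp.single a (1 : k) := by
    rw [pow_add, pow_add, Module.End.mul_apply, Module.End.mul_apply, T_pow_single _ _ _ _ _ h1,
      pow_one, map_smul, T_single, smul_smul, map_smul, wt_update_ge ω i i le_rfl,
      Function.update_self, Function.update_idem, h2, h3, T_pow_single, smul_smul,
      wt_update_ge ω i i le_rfl, Function.update_idem]
    · congr 1
      · ring
      · congr 1
        simp
    · simp
  rw [← hn, wt_pow ω hω, one_mul] at key
  rw [key, Module.algebraMap_end_apply]

lemma mon_T (ω : k) (q : Fin m → k) (a : Fin m → Fin n) (h0 : 0 < n)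
    (l : List (Fin m)) (hl : l.Pairwise (· < ·)) :
    mon (T ω q) l (fun i => (a i : ℕ)) (Finsupp.single (fun _ => (⟨0, h0⟩ : Fin n)) (1 : k)) =
      Finsupp.single (fun j => if j ∈ l then a j else ⟨0, h0⟩) (1 : k) := by
  induction l with
  | nil => simp [mon]
  | cons i l ih =>
    rw [List.pairwise_cons] at hl
    have hil : i ∉ l := fun h => lt_irrefl _ (hl.1 i h)
    rw [mon_cons, Module.End.mul_apply, ih hl.2, T_pow_single]
    · have hw : wt ω i (fun j => if j ∈ l then a j else (⟨0, h0⟩ : Fin n)) = 1 := by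
        unfold wt
        apply Finset.prod_eq_one
        intro j hj
        have hj' : j < i := by simpa using hj
        beta_reduce
        rw [if_neg (fun h => lt_asymm hj' (hl.1 j h))]
        simp
      rw [hw, one_pow, one_smul]
      congr 1
      funext j
      by_cases hj : j = i
      · subst hj
        simp [hil]
      · simp [hj]
    · simp [hil]

end GCAaux

open GCAaux in
/-- The `n^m` standard monomials `e_1^{a_1} ⋯ e_m^{a_m}` with `0 ≤ a_i ≤ n-1`
form a `k`-basis of the generalized Clifford algebra `C^{(n)}(q_1,…,q_m)`;
in particular its dimension is `n^m`. -/
theorem gca_monomials_basis {k : Type*} [Field k] (n m : ℕ)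
    (hn : 2 ≤ n) (hm : 1 ≤ m) (hchar : (n : k) ≠ 0)
    (ω : k) (hω : IsPrimitiveRoot ω n) (q : Fin m → k) (hq : ∀ i, q i ≠ 0) :
    LinearIndependent k (fun a : Fin m → Fin n =>
      (List.ofFn fun i => GCAgen k n m ω q i ^ (a i : ℕ)).prod) ∧
    Submodule.span k (Set.range (fun a : Fin m → Fin n =>
      (List.ofFn fun i => GCAgen k n m ω q i ^ (a i : ℕ)).prod)) = ⊤ ∧
    Module.finrank k (GCA k n m ω q) = n ^ m := by
  classical
  have h0 : 0 < n := by omega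
  set e := GCAgen k n m ω q with he
  have hpow : ∀ i, e i ^ n = algebraMap k _ (q i) := by
    intro i
    have := RingQuot.mkAlgHom_rel k (GCARel.pow (k := k) (n := n) (ω := ω) (q := q) i)
    rw [map_pow, AlgHom.commutes] at this
    exact this
  have hcomm : ∀ i j, j < i → e i * e j = ω • (e j * e i) := by
    intro i j h
    have := RingQuot.mkAlgHom_rel k (GCARel.comm (k := k) (n := n) (ω := ω) (q := q) i j h)
    rw [map_mul, map_smul, map_mul] at this
    exact this
  have hl : (List.finRange m).Pairwise (· < ·) := List.pairwise_lt_finRange m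
  have hM : (fun a : Fin m → Fin n => (List.ofFn fun i => e i ^ (a i : ℕ)).prod) =
      fun a => mon e (List.finRange m) (fun i => (a i : ℕ)) := by
    funext a
    rw [mon, List.ofFn_eq_map]
  rw [hM]
  have hind : LinearIndependent k
      (fun a : Fin m → Fin n => mon e (List.finRange m) (fun i => (a i : ℕ))) := by
    let φ : GCA k n m ω q →ₐ[k] Module.End k ((Fin m → Fin n) →₀ k) :=
      RingQuot.liftAlgHom k ⟨FreeAlgebra.lift k (T ω q), by
        intro x y h
        cases h with
        | pow i => rw [map_pow, FreeAlgebra.lift_ι_apply, AlgHom.commutes, T_pow ω hω.pow_eq_one]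
        | comm i j h =>
          rw [map_mul, map_smul, map_mul, FreeAlgebra.lift_ι_apply, FreeAlgebra.lift_ι_apply,
            T_comm ω hω.pow_eq_one q i j h]⟩
    have hφ : ∀ i, φ (e i) = T ω q i := by
      intro i
      simp only [φ, he, GCAgen]
      rw [RingQuot.liftAlgHom_mkAlgHom_apply, FreeAlgebra.lift_ι_apply]
    let ψ : GCA k n m ω q →ₗ[k] ((Fin m → Fin n) →₀ k) :=
      (LinearMap.applyₗ (Finsupp.single (fun _ => (⟨0, h0⟩ : Fin n)) (1 : k))) ∘ₗ φ.toLinearMap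
    apply LinearIndependent.of_comp ψ
    have : (ψ ∘ fun a : Fin m → Fin n => mon e (List.finRange m) (fun i => (a i : ℕ))) =
        fun a => Finsupp.single a (1 : k) := by
      funext a
      have h1 : φ (mon e (List.finRange m) (fun i => (a i : ℕ))) =
          mon (T ω q) (List.finRange m) (fun i => (a i : ℕ)) := by
        rw [mon, mon, map_list_prod, List.map_map]
        congr 1
        apply List.map_congr_left
        intro i _
        simp [hφ]
      change φ (mon e (List.finRange m) (fun i => (a i : ℕ))) _ = _
      rw [h1, mon_T ω q a h0 _ hl]
      simp
    rw [this]
    exact Finsupp.linearIndependent_single_one k _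
  have hspan : Submodule.span k (Set.range
      (fun a : Fin m → Fin n => mon e (List.finRange m) (fun i => (a i : ℕ)))) = ⊤ := by
    set S := Submodule.span k (Set.range
      (fun a : Fin m → Fin n => mon e (List.finRange m) (fun i => (a i : ℕ)))) with hS
    have hmem : ∀ b : Fin m → ℕ, (∀ i, b i < n) → mon e (List.finRange m) b ∈ S := by
      intro b hb
      exact Submodule.subset_span ⟨fun i => ⟨b i, hb i⟩, rfl⟩
    have hone : (1 : GCA k n m ω q) ∈ S := by
      have := hmem (fun _ => 0) (fun _ => h0)
      simpa [mon] using this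
    have hgen : ∀ i, ∀ x ∈ S, e i * x ∈ S := by
      intro i x hx
      induction hx using Submodule.span_induction with
      | mem x hx =>
        obtain ⟨a, rfl⟩ := hx
        obtain ⟨c, hc⟩ := gen_mul_mon ω e hcomm (fun i => (a i : ℕ)) i _ hl (List.mem_finRange i)
        simp only
        rw [hc]
        apply S.smul_mem
        by_cases hi : (a i : ℕ) + 1 = n
        · rw [hi, mon_top q e hpow _ i _ hl (List.mem_finRange i)]
          apply S.smul_mem
          apply hmem
          intro j
          by_cases hj : j = i
          · subst hj
            simpa using h0
          · simp [hj]
        · apply hmem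
          intro j
          by_cases hj : j = i
          · subst hj
            have := (a j).2
            simp
            omega
          · simp [hj]
      | zero => simp
      | add x y _ _ hx hy => rw [mul_add]; exact S.add_mem hx hy
      | smul c x _ hx => rw [mul_smul_comm]; exact S.smul_mem _ hx
    rw [eq_top_iff]
    rintro x -
    obtain ⟨y, rfl⟩ := RingQuot.mkAlgHom_surjective k (GCARel k n m ω q) x
    have hall : ∀ y : FreeAlgebra k (Fin m), ∀ z ∈ S,
        RingQuot.mkAlgHom k (GCARel k n m ω q) y * z ∈ S := by
      intro y
      induction y using FreeAlgebra.induction with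
      | grade0 r =>
        intro z hz
        rw [AlgHom.commutes, ← Algebra.smul_def]
        exact S.smul_mem _ hz
      | grade1 i => exact hgen i
      | mul a b ha hb =>
        intro z hz
        rw [map_mul, mul_assoc]
        exact ha _ (hb z hz)
      | add a b ha hb =>
        intro z hz
        rw [map_add, add_mul]
        exact S.add_mem (ha z hz) (hb z hz)
    simpa using hall y 1 hone
  refine ⟨hind, hspan, ?_⟩
  rw [Module.finrank_eq_card_basis (Module.Basis.mk hind hspan.ge)]
  simp
end

section
/- Fix 1 ≤ l < m. For g ∈ Z_n^m write g = g' + g'', where g' agrees with g in coordinates 1,…,l and is 0 in coordinates l+1,…,m, and g'' agrees with g in coordinates l+1,…,m and is 0 in coordinates 1,…,l. Then for all g,h ∈ Z_n^m: F_GCA(g,h) = F_GCA(g',h') · F_GCA(g'',h'') · R_GCA(g'',h'). (This scalar identity expresses the decomposition of the generalized Clifford algebra C^{(n)}(q_1,…,q_m) as the braided tensor product of C^{(n)}(q_1,…,q_l) and C^{(n)}(q_{l+1},…,q_m).) -/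
open Finset

/-- The braiding `R_GCA` on `(ℤ/nℤ)^m`. -/
noncomputable def Rgca {k : Type*} [Field k] (n m : ℕ) (ω : k)
    (g h : Fin m → ZMod n) : k :=
  ω ^ (∑ i : Fin m, ∑ j : Fin m,
    if j < i then ((g i).val * (h j).val - (g j).val * (h i).val : ℤ) else 0)

/-- The truncation of `g` to its first `l` coordinates (zero elsewhere). -/
def lowerPart {n m : ℕ} (l : ℕ) (g : Fin m → ZMod n) : Fin m → ZMod n :=
  fun i => if (i : ℕ) < l then g i else 0

/-- The truncation of `g` to its last `m - l` coordinates (zero elsewhere). -/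
def upperPart {n m : ℕ} (l : ℕ) (g : Fin m → ZMod n) : Fin m → ZMod n :=
  fun i => if (i : ℕ) < l then 0 else g i

/-- The scalar identity expressing the decomposition of the generalized Clifford
algebra `C^{(n)}(q_1,…,q_m)` as the braided tensor product of
`C^{(n)}(q_1,…,q_l)` and `C^{(n)}(q_{l+1},…,q_m)`:
`F_GCA(g,h) = F_GCA(g',h') · F_GCA(g'',h'') · R_GCA(g'',h')`. -/
theorem Fgca_decomposition {k : Type*} [Field k] (n m l : ℕ)
    (hn : 2 ≤ n) (hm : 1 ≤ m) (hl : 1 ≤ l) (hlm : l < m) (hchar : (n : k) ≠ 0)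
    (ω : k) (hω : IsPrimitiveRoot ω n) (q : Fin m → k) (hq : ∀ i, q i ≠ 0) :
    ∀ g h : Fin m → ZMod n,
      Fgca n m ω q g h =
        Fgca n m ω q (lowerPart l g) (lowerPart l h) *
          Fgca n m ω q (upperPart l g) (upperPart l h) *
            Rgca n m ω (upperPart l g) (lowerPart l h) := by
  intro g h
  haveI : NeZero n := ⟨by omega⟩
  have hω0 : ω ≠ 0 := hω.ne_zero (by omega)
  have hP : ∏ i : Fin m, q i ^ (((g i).val + (h i).val) / n) =
      (∏ i : Fin m, q i ^ (((lowerPart l g i).val + (lowerPart l h i).val) / n)) *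
      ∏ i : Fin m, q i ^ (((upperPart l g i).val + (upperPart l h i).val) / n) := by
    rw [← Finset.prod_mul_distrib]
    refine Finset.prod_congr rfl fun i _ => ?_
    by_cases hi : (i : ℕ) < l <;> simp [lowerPart, upperPart, hi]
  have hS : ((∑ i : Fin m, ∑ j : Fin m,
        if j < i then (g i).val * (h j).val else 0 : ℕ) : ℤ) =
      ((∑ i : Fin m, ∑ j : Fin m,
        if j < i then (lowerPart l g i).val * (lowerPart l h j).val else 0 : ℕ) : ℤ) +
      ((∑ i : Fin m, ∑ j : Fin m,
        if j < i then (upperPart l g i).val * (upperPart l h j).val else 0 : ℕ) : ℤ) +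
      ∑ i : Fin m, ∑ j : Fin m,
        if j < i then ((upperPart l g i).val * (lowerPart l h j).val -
          (upperPart l g j).val * (lowerPart l h i).val : ℤ) else 0 := by
    push_cast
    simp only [← Finset.sum_add_distrib]
    refine Finset.sum_congr rfl fun i _ => Finset.sum_congr rfl fun j _ => ?_
    by_cases hji : j < i
    · have hji' : (j : ℕ) < i := hji
      by_cases hi : (i : ℕ) < l
      · have hj : (j : ℕ) < l := by omega
        simp [lowerPart, upperPart, hi, hj, hji]
      · by_cases hj : (j : ℕ) < l <;> simp [lowerPart, upperPart, hi, hj, hji]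
    · simp [hji]
  unfold Fgca Rgca
  rw [hP, ← zpow_natCast ω, hS, zpow_add₀ hω0, zpow_add₀ hω0, zpow_natCast, zpow_natCast]
  ring
end

section
/- Let n ≥ 2 be an integer and k a field in which n is invertible. Suppose δ : Z/nZ × Z/nZ → k and ε₀ ∈ k satisfy: (i) ε₀ · δ(i,0) = 1 = ε₀ · δ(0,i) for all i ∈ Z/nZ; (ii) δ(k, i+j−k) = Σ_{l ∈ Z/nZ} δ(l, i−l) · δ(k−l, j+l−k) for all i,j,k ∈ Z/nZ; (iii) δ(i, j−i) = δ(i, −i) for all i,j ∈ Z/nZ. Then δ(i,j) = 1/n for all i,j ∈ Z/nZ, and ε₀ = n. (This is the uniqueness of the weak Hopf structure on the group algebra k[Z/nZ].) -/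
open Finset

/-- Uniqueness of the weak Hopf structure on the group algebra `k[ℤ/nℤ]`:
any pair `(δ, ε₀)` satisfying the counitary condition, the multiplicativity
condition and the weak unit condition must be the constant `1/n` together with
`ε₀ = n`. -/
theorem weakHopf_unique_ZMod {k : Type*} [Field k] (n : ℕ)
    (hn : 2 ≤ n) (hchar : (n : k) ≠ 0) [NeZero n]
    (δ : ZMod n → ZMod n → k) (ε₀ : k)
    (hcounit : ∀ i : ZMod n, ε₀ * δ i 0 = 1 ∧ ε₀ * δ 0 i = 1)
    (hmul : ∀ i j K : ZMod n,
      δ K (i + j - K) = ∑ l : ZMod n, δ l (i - l) * δ (K - l) (j + l - K))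
    (hweak : ∀ i j : ZMod n, δ i (j - i) = δ i (-i)) :
    (∀ i j : ZMod n, δ i j = (n : k)⁻¹) ∧ ε₀ = (n : k) := by
  have he : ε₀ ≠ 0 := by
    intro h
    have := (hcounit 0).1
    simp [h] at this
  have h1 : ∀ i j : ZMod n, δ i j = δ i (-i) := by
    intro i j
    have := hweak i (j + i)
    rwa [add_sub_cancel_right] at this
  have h2 : ∀ i j : ZMod n, δ i j = ε₀⁻¹ := by
    intro i j
    rw [h1 i j, ← h1 i 0]
    exact eq_inv_of_mul_eq_one_right (hcounit i).1
  have h3 := hmul 0 0 0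
  simp only [h2, sum_const, card_univ, ZMod.card, nsmul_eq_mul] at h3
  have h4 : ε₀ = (n : k) := by
    field_simp at h3
    exact h3
  exact ⟨fun i j => by rw [h2, h4], h4⟩
end

section
/- Let n ≥ 2 and m ≥ 1 be integers and k a field in which n is invertible. Suppose δ : Z_n^m × Z_n^m → k and ε₀ ∈ k satisfy: (i) ε₀ · δ(g,0) = 1 = ε₀ · δ(0,g) for all g ∈ Z_n^m; (ii) δ(h, f+g−h) = Σ_{l ∈ Z_n^m} δ(l, f−l) · δ(h−l, g+l−h) for all f,g,h ∈ Z_n^m; (iii) δ(g, h−g) = δ(g, −g) for all g,h ∈ Z_n^m. Then δ(g,h) = 1/n^m for all g,h ∈ Z_n^m, and ε₀ = n^m. (This is the uniqueness of the weak Hopf structure on the group algebra k[Z_n^m].) -/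
open Finset

/-- Uniqueness of the weak Hopf structure on the group algebra `k[(ℤ/nℤ)^m]`:
any pair `(δ, ε₀)` satisfying the counitary condition, the multiplicativity
condition and the weak unit condition must be the constant `1/n^m` together
with `ε₀ = n^m`. -/
theorem weakHopf_unique_ZModPow {k : Type*} [Field k] (n m : ℕ)
    (hn : 2 ≤ n) (hm : 1 ≤ m) (hchar : (n : k) ≠ 0) [NeZero n]
    (δ : (Fin m → ZMod n) → (Fin m → ZMod n) → k) (ε₀ : k)
    (hcounit : ∀ g : Fin m → ZMod n, ε₀ * δ g 0 = 1 ∧ ε₀ * δ 0 g = 1)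
    (hmul : ∀ f g h : Fin m → ZMod n,
      δ h (f + g - h) = ∑ l : Fin m → ZMod n, δ l (f - l) * δ (h - l) (g + l - h))
    (hweak : ∀ g h : Fin m → ZMod n, δ g (h - g) = δ g (-g)) :
    (∀ g h : Fin m → ZMod n, δ g h = ((n : k) ^ m)⁻¹) ∧ ε₀ = (n : k) ^ m := by
  have he : ε₀ ≠ 0 := by
    rintro rfl
    simpa using (hcounit 0).1
  have hd : ∀ g h, δ g h = ε₀⁻¹ := by
    intro g h
    have h1 := hweak g (h + g)
    have h2 := hweak g g
    rw [add_sub_cancel_right] at h1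
    rw [sub_self] at h2
    rw [h1, ← h2]
    exact eq_inv_of_mul_eq_one_right (hcounit g).1
  have hs := hmul 0 0 0
  simp only [hd, Finset.sum_const, Finset.card_univ, nsmul_eq_mul] at hs
  have hc : ((Fintype.card (Fin m → ZMod n) : ℕ) : k) = (n : k) ^ m := by
    simp [ZMod.card]
  rw [hc] at hs
  have hee : ε₀ = (n : k) ^ m := by
    field_simp at hs
    exact hs
  exact ⟨fun g h => by rw [hd, hee], hee⟩
end

section
/- The map Δ is multiplicative: Δ(x·y) = Δ(x)·Δ(y) for all x,y ∈ A, where A ⊗_k A carries the usual tensor product algebra structure. (Nevertheless Δ(1) = n^{−m} Σ_{h ∈ G} u_h ⊗ u_{−h} ≠ 1 ⊗ 1, so Δ is not unit-preserving.) -/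
open Finset
open scoped TensorProduct

/-- The comultiplication `Δ(u_g) = n^{-m} Σ_h u_h ⊗ u_{g-h}` on the group algebra
`k[(ℤ/nℤ)^m]` is multiplicative, but not unit-preserving:
`Δ(1) = n^{-m} Σ_h u_h ⊗ u_{-h} ≠ 1 ⊗ 1`. -/
theorem groupAlgebra_comul_multiplicative {k : Type*} [Field k] (n m : ℕ)
    (hn : 2 ≤ n) (hm : 1 ≤ m) (hchar : (n : k) ≠ 0) [NeZero n]
    (Δ : AddMonoidAlgebra k (Fin m → ZMod n) →ₗ[k]
      AddMonoidAlgebra k (Fin m → ZMod n) ⊗[k] AddMonoidAlgebra k (Fin m → ZMod n))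
    (hΔ : ∀ g : Fin m → ZMod n,
      Δ (AddMonoidAlgebra.single g 1) = ((n : k) ^ m)⁻¹ •
        ∑ h : Fin m → ZMod n,
          AddMonoidAlgebra.single h (1 : k) ⊗ₜ[k]
            AddMonoidAlgebra.single (g - h) (1 : k)) :
    (∀ x y : AddMonoidAlgebra k (Fin m → ZMod n), Δ (x * y) = Δ x * Δ y) ∧
    Δ 1 = ((n : k) ^ m)⁻¹ •
      ∑ h : Fin m → ZMod n,
        AddMonoidAlgebra.single h (1 : k) ⊗ₜ[k]
          AddMonoidAlgebra.single (-h) (1 : k) ∧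
    Δ 1 ≠ 1 := by
  have h1 : Δ 1 = ((n : k) ^ m)⁻¹ •
      ∑ h : Fin m → ZMod n,
        AddMonoidAlgebra.single h (1 : k) ⊗ₜ[k]
          AddMonoidAlgebra.single (-h) (1 : k) := by
    rw [AddMonoidAlgebra.one_def, hΔ]
    simp only [zero_sub]
  have hnm : ((n : k) ^ m) ≠ 0 := pow_ne_zero _ hchar
  refine ⟨?_, h1, ?_⟩
  · have key : ∀ g g' : Fin m → ZMod n,
        Δ (AddMonoidAlgebra.single g 1 * AddMonoidAlgebra.single g' 1) =
          Δ (AddMonoidAlgebra.single g 1) * Δ (AddMonoidAlgebra.single g' 1) := by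
      intro g g'
      rw [AddMonoidAlgebra.single_mul_single, one_mul, hΔ, hΔ, hΔ, smul_mul_smul_comm,
        Finset.sum_mul_sum]
      have : ∀ i : Fin m → ZMod n, ∑ j : Fin m → ZMod n,
          ((AddMonoidAlgebra.single i (1 : k) ⊗ₜ[k] AddMonoidAlgebra.single (g - i) (1 : k)) *
          (AddMonoidAlgebra.single j (1 : k) ⊗ₜ[k] AddMonoidAlgebra.single (g' - j) (1 : k)))
          = ∑ h : Fin m → ZMod n,
          AddMonoidAlgebra.single h (1 : k) ⊗ₜ[k]
            AddMonoidAlgebra.single (g + g' - h) (1 : k) := by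
        intro i
        refine Fintype.sum_equiv (Equiv.addLeft i) _ _ fun j => ?_
        rw [Algebra.TensorProduct.tmul_mul_tmul, AddMonoidAlgebra.single_mul_single,
          AddMonoidAlgebra.single_mul_single, one_mul, Equiv.coe_addLeft,
          sub_add_sub_comm]
      rw [Finset.sum_congr rfl fun i _ => this i, Finset.sum_const, Finset.card_univ,
        ← Nat.cast_smul_eq_nsmul k, smul_smul]
      congr 1
      simp only [Fintype.card_pi, ZMod.card, Finset.prod_const, Finset.card_univ,
        Fintype.card_fin, Nat.cast_pow]
      field_simp
    have hs : ∀ (g : Fin m → ZMod n) (r : k), AddMonoidAlgebra.single g r =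
        r • AddMonoidAlgebra.single g (1 : k) := by
      intro g r
      simp
    intro x y
    induction x using AddMonoidAlgebra.induction_linear with
    | zero => simp
    | add a b ha hb => rw [add_mul, map_add, map_add, add_mul, ha, hb]
    | single g r =>
      induction y using AddMonoidAlgebra.induction_linear with
      | zero => simp
      | add a b ha hb => rw [mul_add, map_add, map_add, mul_add, ha, hb]
      | single g' r' =>
        rw [hs g r, hs g' r', smul_mul_smul_comm, map_smul, map_smul, map_smul, key,
          smul_mul_smul_comm]
  · intro h
    rw [h1] at h
    have : Fact (1 < n) := ⟨hn⟩
    let a : Fin m → ZMod n := fun _ => 1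
    have ha : a ≠ 0 := fun e => one_ne_zero (congrFun e ⟨0, hm⟩ : (1 : ZMod n) = 0)
    let f : (Fin m → ZMod n) → AddMonoidAlgebra k (Fin m → ZMod n) →ₗ[k] k := fun b =>
      Finsupp.lapply b ∘ₗ (AddMonoidAlgebra.coeffLinearEquiv k).toLinearMap
    have hf : ∀ b c, f b (AddMonoidAlgebra.single c 1) = if c = b then 1 else 0 := by
      intro b c
      simp [f, Finsupp.single_apply]
    have h2 := congrArg (LinearMap.mul' k k ∘ₗ TensorProduct.map (f a) (f (-a))) h
    rw [Algebra.TensorProduct.one_def, AddMonoidAlgebra.one_def] at h2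
    simp [hf, ha.symm, hchar] at h2
end

section
/- The counit ε satisfies the weak bialgebra counit identity: for all f,g,h ∈ G, ε((u_f · u_g) · u_h) = n^{−m} Σ_{l ∈ G} ε(u_f · u_l) · ε(u_{g−l} · u_h). -/
open Finset

/-- The counit `ε(u_g) = n^m δ_{g,0}` on the group algebra `k[(ℤ/nℤ)^m]`
satisfies the weak bialgebra counit identity
`ε((u_f u_g) u_h) = n^{-m} Σ_l ε(u_f u_l) ε(u_{g-l} u_h)`. -/
theorem groupAlgebra_weak_counit {k : Type*} [Field k] (n m : ℕ)
    (hn : 2 ≤ n) (hm : 1 ≤ m) (hchar : (n : k) ≠ 0) [NeZero n]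
    (ε : AddMonoidAlgebra k (Fin m → ZMod n) →ₗ[k] k)
    (hε : ∀ g : Fin m → ZMod n,
      ε (AddMonoidAlgebra.single g 1) = if g = 0 then (n : k) ^ m else 0) :
    ∀ f g h : Fin m → ZMod n,
      ε ((AddMonoidAlgebra.single f (1 : k) * AddMonoidAlgebra.single g 1) *
          AddMonoidAlgebra.single h 1) =
        ((n : k) ^ m)⁻¹ * ∑ l : Fin m → ZMod n,
          ε (AddMonoidAlgebra.single f (1 : k) * AddMonoidAlgebra.single l 1) *
            ε (AddMonoidAlgebra.single (g - l) (1 : k) *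
              AddMonoidAlgebra.single h 1) := by
  intro f g h
  have hN : (n : k) ^ m ≠ 0 := pow_ne_zero m hchar
  simp only [AddMonoidAlgebra.single_mul_single, mul_one, hε]
  rw [Finset.sum_eq_single (-f)]
  · have e : g - -f + h = f + g + h := by abel
    rw [e, add_neg_cancel, if_pos rfl, inv_mul_cancel_left₀ hN]
  · intro l _ hl
    have h1 : f + l ≠ 0 := fun h0 => hl (eq_neg_of_add_eq_zero_right h0)
    rw [if_neg h1, zero_mul]
  · intro h0
    exact absurd (Finset.mem_univ _) h0
end

section
/- Let G be a finite abelian group (written multiplicatively, with unit e) and k a field with char k ∤ |G|. On the group algebra A = MonoidAlgebra k G with canonical basis {u_g : g ∈ G}, define Δ(u_g) = |G|^{−1} Σ_{u ∈ G} u_u ⊗ u_{u^{−1}g} and ε(u_g) = |G| if g = e and 0 otherwise. Then (A, Δ, ε) is a coassociative counital coalgebra, and Δ is multiplicative: Δ(x·y) = Δ(x)·Δ(y) for all x,y ∈ A. -/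
open Finset
open scoped TensorProduct

/-- For a finite abelian group `G` and a field `k` with `char k ∤ |G|`, the maps
`Δ(u_g) = |G|⁻¹ Σ_u u_u ⊗ u_{u⁻¹g}` and `ε(u_g) = |G| δ_{g,e}` make the group
algebra `k[G]` a coassociative counital coalgebra, and `Δ` is multiplicative. -/
theorem groupAlgebra_weakHopf_general {k : Type*} [Field k]
    {G : Type*} [CommGroup G] [Fintype G] [DecidableEq G]
    (hchar : (Fintype.card G : k) ≠ 0)
    (Δ : MonoidAlgebra k G →ₗ[k] MonoidAlgebra k G ⊗[k] MonoidAlgebra k G)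
    (ε : MonoidAlgebra k G →ₗ[k] k)
    (hΔ : ∀ g : G,
      Δ (MonoidAlgebra.single g 1) = (Fintype.card G : k)⁻¹ •
        ∑ u : G, MonoidAlgebra.single u (1 : k) ⊗ₜ[k]
          MonoidAlgebra.single (u⁻¹ * g) (1 : k))
    (hε : ∀ g : G,
      ε (MonoidAlgebra.single g 1) = if g = 1 then (Fintype.card G : k) else 0) :
    (∀ x, TensorProduct.assoc k _ _ _ (TensorProduct.map Δ LinearMap.id (Δ x)) =
      TensorProduct.map LinearMap.id Δ (Δ x)) ∧
    (∀ x, TensorProduct.lid k _ (TensorProduct.map ε LinearMap.id (Δ x)) = x) ∧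
    (∀ x, TensorProduct.rid k _ (TensorProduct.map LinearMap.id ε (Δ x)) = x) ∧
    (∀ x y : MonoidAlgebra k G, Δ (x * y) = Δ x * Δ y) := by
  have ind : ∀ {M : Type _} [AddCommMonoid M] [Module k M] (f f' : MonoidAlgebra k G →ₗ[k] M),
      (∀ g, f (MonoidAlgebra.single g 1) = f' (MonoidAlgebra.single g 1)) → ∀ x, f x = f' x := by
    intro M _ _ f f' h x
    have : f = f' := by
      ext g
      simpa using h g
    rw [this]
  refine ⟨?_, ?_, ?_, ?_⟩
  · refine ind ((TensorProduct.assoc k _ _ _).toLinearMap ∘ₗ TensorProduct.map Δ LinearMap.id ∘ₗ Δ)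
      (TensorProduct.map LinearMap.id Δ ∘ₗ Δ) ?_
    intro g
    simp only [LinearMap.comp_apply, LinearEquiv.coe_coe, hΔ, map_smul, map_sum,
      TensorProduct.map_tmul, LinearMap.id_apply, ← TensorProduct.smul_tmul', TensorProduct.tmul_smul,
      TensorProduct.sum_tmul, TensorProduct.tmul_sum, TensorProduct.assoc_tmul]
    simp only [← Finset.smul_sum]
    congr 2
    rw [Finset.sum_comm]
    refine Finset.sum_congr rfl fun v _ => ?_
    rw [← Equiv.sum_comp (Equiv.mulLeft v) (fun u => MonoidAlgebra.single v (1 : k) ⊗ₜ[k]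
      (MonoidAlgebra.single (v⁻¹ * u) (1 : k) ⊗ₜ[k] MonoidAlgebra.single (u⁻¹ * g) (1 : k)))]
    refine Finset.sum_congr rfl fun w _ => ?_
    simp [mul_assoc]
  · refine ind ((TensorProduct.lid k _).toLinearMap ∘ₗ TensorProduct.map ε LinearMap.id ∘ₗ Δ)
      LinearMap.id ?_
    intro g
    simp only [LinearMap.comp_apply, LinearEquiv.coe_coe, hΔ, hε, map_smul, map_sum,
      TensorProduct.map_tmul, LinearMap.id_apply, TensorProduct.lid_tmul, ite_smul, zero_smul,
      Finset.sum_ite_eq', Finset.mem_univ, if_true, smul_smul, inv_mul_cancel₀ hchar, one_smul,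
      inv_one, one_mul]
  · refine ind ((TensorProduct.rid k _).toLinearMap ∘ₗ TensorProduct.map LinearMap.id ε ∘ₗ Δ)
      LinearMap.id ?_
    intro g
    simp only [LinearMap.comp_apply, LinearEquiv.coe_coe, hΔ, hε, map_smul, map_sum,
      TensorProduct.map_tmul, LinearMap.id_apply, TensorProduct.rid_tmul, ite_smul, zero_smul,
      inv_mul_eq_one,
      Finset.sum_ite_eq', Finset.mem_univ, if_true, smul_smul, inv_mul_cancel₀ hchar, one_smul]
  · intro x y
    refine ind (Δ ∘ₗ LinearMap.mulRight k y) (LinearMap.mulRight k (Δ y) ∘ₗ Δ) ?_ x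
    intro g
    refine ind (Δ ∘ₗ LinearMap.mulLeft k (MonoidAlgebra.single g 1))
      (LinearMap.mulLeft k (Δ (MonoidAlgebra.single g 1)) ∘ₗ Δ) ?_ y
    intro h
    simp only [LinearMap.comp_apply, LinearMap.mulLeft_apply, MonoidAlgebra.single_mul_single,
      mul_one, hΔ, smul_mul_smul_comm, Finset.sum_mul_sum,
      Algebra.TensorProduct.tmul_mul_tmul]
    have key : ∀ u : G, (∑ v : G, MonoidAlgebra.single (u * v) (1 : k) ⊗ₜ[k]
          MonoidAlgebra.single (u⁻¹ * g * (v⁻¹ * h)) (1 : k)) =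
        ∑ w : G, MonoidAlgebra.single w (1 : k) ⊗ₜ[k]
          MonoidAlgebra.single (w⁻¹ * (g * h)) (1 : k) := by
      intro u
      rw [← Equiv.sum_comp (Equiv.mulLeft u) (fun w => MonoidAlgebra.single w (1 : k) ⊗ₜ[k]
          MonoidAlgebra.single (w⁻¹ * (g * h)) (1 : k))]
      refine Finset.sum_congr rfl fun v _ => ?_
      have : u⁻¹ * g * (v⁻¹ * h) = (u * v)⁻¹ * (g * h) := by
        rw [mul_inv, mul_mul_mul_comm]
      simp [this]
    simp only [key, Finset.sum_const, Finset.card_univ]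
    rw [← Nat.cast_smul_eq_nsmul k, smul_smul, mul_assoc, inv_mul_cancel₀ hchar, mul_one]
end

section
/- For all g,h,s ∈ Z_n^m the following identity holds in k: Σ_{a ∈ Z_n^m} F_GCA(a, g−a)^{−1} · F_GCA(s−a, h−s+a)^{−1} · R_GCA(g−a, s−a) · F_GCA(a, s−a) · F_GCA(g−a, h−s+a) = n^m · F_GCA(g,h) · F_GCA(s, g+h−s)^{−1}. (This scalar identity expresses that the comultiplication Δ(u_g) = n^{−m} Σ_{h} F_GCA(h, g−h)^{−1} u_h ⊗ u_{g−h} on the twisted group algebra k_{F_GCA}[Z_n^m] — i.e., on the generalized Clifford algebra C^{(n)}(q_1,…,q_m) — is multiplicative with respect to the R_GCA-braided tensor product.) -/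
open Finset

theorem aux_floor (n : ℕ) [NeZero n] (x y : ZMod n) :
    n * ((x.val + y.val) / n) + (x + y).val = x.val + y.val := by
  rw [ZMod.val_add]; exact Nat.div_add_mod _ _

theorem aux_q (n : ℕ) [NeZero n] (a b c d : ZMod n) :
    (a.val + c.val) / n + (b.val + d.val) / n + ((a + c).val + (b + d).val) / n =
    ((a + b).val + (c + d).val) / n + (a.val + b.val) / n + (c.val + d.val) / n := by
  have h1 := aux_floor n a c
  have h2 := aux_floor n b d
  have h3 := aux_floor n (a + c) (b + d)
  have h4 := aux_floor n (a + b) (c + d)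
  have h5 := aux_floor n a b
  have h6 := aux_floor n c d
  have e : a + c + (b + d) = a + b + (c + d) := by ring
  rw [e] at h3
  have hn : 0 < n := Nat.pos_of_ne_zero (NeZero.ne n)
  apply Nat.eq_of_mul_eq_mul_left hn
  simp only [mul_add]
  omega

theorem aux_zpow {k : Type*} [Field k] (n : ℕ) (ω : k) (hω : IsPrimitiveRoot ω n)
    (hn : ω ≠ 0) (x y : ℤ) (h : (x : ZMod n) = y) : ω ^ x = ω ^ y := by
  rw [ZMod.intCast_eq_intCast_iff_dvd_sub] at h
  have := (hω.zpow_eq_one_iff_dvd _).2 h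
  rw [zpow_sub₀ hn] at this
  field_simp at this
  exact this.symm

theorem aux_term {k : Type*} [Field k] (n m : ℕ) [NeZero n]
    (ω : k) (hω : IsPrimitiveRoot ω n) (q : Fin m → k) (hq : ∀ i, q i ≠ 0)
    (a b c d : Fin m → ZMod n) :
    (Fgca n m ω q a b)⁻¹ * (Fgca n m ω q c d)⁻¹ * Rgca n m ω b c *
      Fgca n m ω q a c * Fgca n m ω q b d =
    Fgca n m ω q (a + b) (c + d) * (Fgca n m ω q (a + c) (b + d))⁻¹ := by
  have hω0 : ω ≠ 0 := hω.ne_zero (NeZero.ne n)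
  have hF : ∀ x y, Fgca n m ω q x y ≠ 0 := fun x y =>
    mul_ne_zero (pow_ne_zero _ hω0) (Finset.prod_ne_zero_iff.2 fun i _ => pow_ne_zero _ (hq i))
  have key : Rgca n m ω b c * Fgca n m ω q a c * Fgca n m ω q b d *
      Fgca n m ω q (a + c) (b + d) =
      Fgca n m ω q (a + b) (c + d) * Fgca n m ω q a b * Fgca n m ω q c d := by
    let W : (Fin m → ZMod n) → (Fin m → ZMod n) → ℕ := fun g h =>
      ∑ i : Fin m, ∑ j : Fin m, if j < i then (g i).val * (h j).val else 0
    let Q : (Fin m → ZMod n) → (Fin m → ZMod n) → k := fun g h =>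
      ∏ i : Fin m, q i ^ (((g i).val + (h i).val) / n)
    have hFd : ∀ x y, Fgca n m ω q x y = ω ^ ((W x y : ℕ) : ℤ) * Q x y := fun x y => by
      rw [zpow_natCast]; rfl
    have hQ : Q a c * Q b d * Q (a + c) (b + d) = Q (a + b) (c + d) * Q a b * Q c d := by
      simp only [Q, ← Finset.prod_mul_distrib, ← pow_add]
      refine Finset.prod_congr rfl fun i _ => ?_
      congr 1
      exact aux_q n _ _ _ _
    have hW : Rgca n m ω b c * ω ^ ((W a c : ℕ) : ℤ) * ω ^ ((W b d : ℕ) : ℤ) *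
        ω ^ ((W (a + c) (b + d) : ℕ) : ℤ) =
        ω ^ ((W (a + b) (c + d) : ℕ) : ℤ) * ω ^ ((W a b : ℕ) : ℤ) *
        ω ^ ((W c d : ℕ) : ℤ) := by
      simp only [Rgca, ← zpow_add₀ hω0]
      apply aux_zpow n ω hω hω0
      simp only [W]
      push_cast
      simp only [ZMod.natCast_zmod_val, ← Finset.sum_add_distrib]
      refine Finset.sum_congr rfl fun i _ => Finset.sum_congr rfl fun j _ => ?_
      split_ifs
      · simp only [Pi.add_apply]
        push_cast
        ring
      · simp
    simp only [hFd]
    linear_combination (Q a c * Q b d * Q (a + c) (b + d)) * hW +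
      (ω ^ ((W (a + b) (c + d) : ℕ) : ℤ) * ω ^ ((W a b : ℕ) : ℤ) *
        ω ^ ((W c d : ℕ) : ℤ)) * hQ
  have h1 := hF a b
  have h2 := hF c d
  have h3 := hF (a + c) (b + d)
  field_simp
  linear_combination key

/-- The scalar identity expressing that the comultiplication
`Δ(u_g) = n^{-m} Σ_h F_GCA(h, g-h)⁻¹ u_h ⊗ u_{g-h}` on the twisted group algebra
`k_{F_GCA}[(ℤ/nℤ)^m]`, i.e., on the generalized Clifford algebra
`C^{(n)}(q_1,…,q_m)`, is multiplicative with respect to the `R_GCA`-braided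
tensor product. -/
theorem gca_comul_multiplicative_scalar {k : Type*} [Field k] (n m : ℕ)
    (hn : 2 ≤ n) (hm : 1 ≤ m) (hchar : (n : k) ≠ 0) [NeZero n]
    (ω : k) (hω : IsPrimitiveRoot ω n) (q : Fin m → k) (hq : ∀ i, q i ≠ 0) :
    ∀ g h s : Fin m → ZMod n,
      ∑ a : Fin m → ZMod n,
          (Fgca n m ω q a (g - a))⁻¹ * (Fgca n m ω q (s - a) (h - s + a))⁻¹ *
            Rgca n m ω (g - a) (s - a) * Fgca n m ω q a (s - a) *
              Fgca n m ω q (g - a) (h - s + a) =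
        (n : k) ^ m * Fgca n m ω q g h * (Fgca n m ω q s (g + h - s))⁻¹ := by
  intro g h s
  have : ∀ a ∈ (Finset.univ : Finset (Fin m → ZMod n)),
      (Fgca n m ω q a (g - a))⁻¹ * (Fgca n m ω q (s - a) (h - s + a))⁻¹ *
            Rgca n m ω (g - a) (s - a) * Fgca n m ω q a (s - a) *
              Fgca n m ω q (g - a) (h - s + a) =
        Fgca n m ω q g h * (Fgca n m ω q s (g + h - s))⁻¹ := by
    intro a _
    rw [aux_term n m ω hω q hq]
    have e1 : a + (g - a) = g := by abel
    have e2 : s - a + (h - s + a) = h := by abel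
    have e3 : a + (s - a) = s := by abel
    have e4 : g - a + (h - s + a) = g + h - s := by abel
    rw [e1, e2, e3, e4]
  rw [Finset.sum_congr rfl this]
  simp [ZMod.card, mul_assoc]
end
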